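/- Let (G,P) be a quasi-lattice ordered group and (E,φ) a finitely aligned product system of graphs over P. Then the Fock family {S_λ : λ ∈ E¹} on ℓ²(E¹) is a Toeplitz–Cuntz–Krieger E-family. Moreover, for every v ∈ E⁰ and p ∈ P∖{e} with s_p⁻¹(v) finite, (S_v − ∑_{λ∈s_p⁻¹(v)} S_λ S_λ*) e_v = e_v; in particular, if some vertex emits only finitely many edges in some E_p (p ≠ e), the Fock family does not satisfy the Cuntz–Pimsner relation S_v = ∑_{λ∈s_p⁻¹(v)} S_λ S_λ*. -/

import Mathlib

open scoped Classical

noncomputable section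

namespace PSG

variable {G : Type*} [Group G] {Λ : Type*}

/-- `g ≤ h` in the left-invariant partial order induced by the submonoid `P`. -/
def qle (P : Submonoid G) (g h : G) : Prop := g⁻¹ * h ∈ P

/-- `r` is a common upper bound of `p` and `q` in `P`. -/
def IsUB (P : Submonoid G) (p q r : G) : Prop := r ∈ P ∧ qle P p r ∧ qle P q r

/-- `r` is the least common upper bound of `p` and `q` in `P`. -/
def IsLUB2 (P : Submonoid G) (p q r : G) : Prop :=
  IsUB P p q r ∧ ∀ r', IsUB P p q r' → qle P r r'

/-- `r` is the least upper bound in `P` of the set of degrees `D`. -/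
def IsLUBFam (P : Submonoid G) (D : Set G) (r : G) : Prop :=
  r ∈ P ∧ (∀ p ∈ D, qle P p r) ∧ ∀ r' ∈ P, (∀ p ∈ D, qle P p r') → qle P r r'

/-- `(G, P)` is quasi-lattice ordered: `P ∩ P⁻¹ = {1}` and every pair of elements of `P`
with a common upper bound in `P` has a least upper bound in `P`. -/
def QuasiLatticeOrdered (P : Submonoid G) : Prop :=
  (∀ g ∈ P, g⁻¹ ∈ P → g = 1) ∧
    ∀ p ∈ P, ∀ q ∈ P, (∃ r, IsUB P p q r) → ∃ r, IsLUB2 P p q r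

/-- A product system of graphs over `P`, encoded on a single edge set `Λ` (which contains the
vertices as the elements of degree `1`), with degree map `d`, source and range maps `src`, `rng`
(valued in vertices), and partial multiplication `mul` (meaningful when `rng a = src b`). -/
structure IsProductSystem (P : Submonoid G) (d : Λ → G) (src rng : Λ → Λ)
    (mul : Λ → Λ → Λ) : Prop where
  countable : Countable Λ
  d_mem : ∀ a, d a ∈ P
  d_src : ∀ a, d (src a) = 1
  d_rng : ∀ a, d (rng a) = 1
  src_vertex : ∀ v, d v = 1 → src v = v
  rng_vertex : ∀ v, d v = 1 → rng v = v
  d_mul : ∀ a b, rng a = src b → d (mul a b) = d a * d b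
  src_mul : ∀ a b, rng a = src b → src (mul a b) = src a
  rng_mul : ∀ a b, rng a = src b → rng (mul a b) = rng b
  mul_assoc' : ∀ a b c, rng a = src b → rng b = src c →
    mul (mul a b) c = mul a (mul b c)
  src_mul_self : ∀ a, mul (src a) a = a
  mul_rng_self : ∀ a, mul a (rng a) = a
  factor : ∀ p q : G, p ∈ P → q ∈ P → ∀ c, d c = p * q →
    ∃! ab : Λ × Λ, d ab.1 = p ∧ d ab.2 = q ∧ rng ab.1 = src ab.2 ∧ mul ab.1 ab.2 = c

/-- `a` is an initial segment of `c`: `c = a • b` for some (necessarily unique) `b`. -/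
def IsInit (src rng : Λ → Λ) (mul : Λ → Λ → Λ) (a c : Λ) : Prop :=
  ∃ b, rng a = src b ∧ mul a b = c

/-- The set of minimal common extensions of `μ` and `ν`. -/
def MCE (P : Submonoid G) (d : Λ → G) (src rng : Λ → Λ) (mul : Λ → Λ → Λ)
    (μ ν : Λ) : Set Λ :=
  {γ | IsInit src rng mul μ γ ∧ IsInit src rng mul ν γ ∧ IsLUB2 P (d μ) (d ν) (d γ)}

/-- The product system is finitely aligned. -/
def FinitelyAligned (P : Submonoid G) (d : Λ → G) (src rng : Λ → Λ)
    (mul : Λ → Λ → Λ) : Prop :=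
  ∀ μ ν : Λ, (MCE P d src rng mul μ ν).Finite

/-- The set of minimal common extensions of a set `S` of edges. -/
def MCEset (P : Submonoid G) (d : Λ → G) (src rng : Λ → Λ) (mul : Λ → Λ → Λ)
    (S : Set Λ) : Set Λ :=
  {γ | (∀ α ∈ S, IsInit src rng mul α γ) ∧ IsLUBFam P (d '' S) (d γ)}

/-- `∨F`: the union of `MCE(S)` over the nonempty subsets `S ⊆ F`. -/
def vee (P : Submonoid G) (d : Λ → G) (src rng : Λ → Λ) (mul : Λ → Λ → Λ)
    (F : Finset Λ) : Set Λ :=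
  {γ | ∃ S : Finset Λ, S.Nonempty ∧ S ⊆ F ∧ γ ∈ MCEset P d src rng mul ↑S}

/-- Given that `a` is an initial segment of `c`, the (unique) complementary segment;
junk value `c` otherwise. -/
def tail (src rng : Λ → Λ) (mul : Λ → Λ → Λ) (a c : Λ) : Λ :=
  if h : IsInit src rng mul a c then h.choose else c

section CstarFamilies

variable (P : Submonoid G) (d : Λ → G) (src rng : Λ → Λ) (mul : Λ → Λ → Λ)
variable {B : Type*} [CStarAlgebra B] [PartialOrder B] [StarOrderedRing B]

/-- A Toeplitz `E`-family in a C*-algebra `B` (conditions (1)–(4)). -/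
structure IsToeplitzFamily (t : Λ → B) : Prop where
  vertex_sa : ∀ v, d v = 1 → IsSelfAdjoint (t v)
  vertex_idem : ∀ v, d v = 1 → t v * t v = t v
  vertex_orth : ∀ v w, d v = 1 → d w = 1 → v ≠ w → t v * t w = 0
  mul_eq : ∀ a b, rng a = src b → t a * t b = t (mul a b)
  star_mul_self : ∀ a, star (t a) * t a = t (rng a)
  dom : ∀ p : G, p ∈ P → p ≠ 1 → ∀ v, d v = 1 → ∀ F : Finset Λ,
    (∀ a ∈ F, d a = p ∧ src a = v) → (∑ a ∈ F, t a * star (t a)) ≤ t v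

/-- The Nica-covariance/Cuntz–Krieger relation (5):
`tμ* tν = ∑_{γ = μα = νβ ∈ MCE(μ,ν)} tα tβ*`. -/
def TCKrel (t : Λ → B) : Prop :=
  ∀ μ ν : Λ, ∀ M : Finset Λ, ↑M = MCE P d src rng mul μ ν →
    star (t μ) * t ν =
      ∑ γ ∈ M, t (tail src rng mul μ γ) * star (t (tail src rng mul ν γ))

/-- A Toeplitz–Cuntz–Krieger `E`-family: conditions (1)–(5). -/
def IsTCKFamily (t : Λ → B) : Prop :=
  IsToeplitzFamily P d src rng mul t ∧ TCKrel P d src rng mul t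

/-- Condition (†): for every finite `R ⊆ P∖{1}`, every vertex `v`, and all finite sets
`F_p ⊆ s_p⁻¹(v)` (`p ∈ R`), the product `∏_{p ∈ R} (t_v − ∑_{a ∈ F_p} t_a t_a*)` is nonzero.
(The factors commute, so the product is stated for an arbitrary enumeration of `R`.) -/
def Dagger (t : Λ → B) : Prop :=
  ∀ R : List G, R.Nodup → (∀ p ∈ R, p ∈ P ∧ p ≠ 1) →
    ∀ v, d v = 1 → ∀ Fp : G → Finset Λ,
      (∀ p ∈ R, ∀ a ∈ Fp p, d a = p ∧ src a = v) →
        (R.map fun p => t v - ∑ a ∈ Fp p, t a * star (t a)).prod ≠ 0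

/-- The projection `Q^{∨F}_l = t_l t_l* ∏_{l α ∈ ∨F, d α ≠ 1} (t_{s(l)} − t_{lα} t_{lα}*)`.
(The factors commute, so the product is computed over an arbitrary enumeration.) -/
def Qproj (t : Λ → B) (F : Finset Λ) (l : Λ) : B :=
  if h : {α : Λ | d α ≠ 1 ∧ rng l = src α ∧ mul l α ∈ vee P d src rng mul F}.Finite then
    t l * star (t l) *
      (h.toFinset.toList.map fun α =>
        t (src l) - t (mul l α) * star (t (mul l α))).prod
  else 0

end CstarFamilies

/-- The positive cone `ℕ^k` inside `ℤ^k` (written multiplicatively). -/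
def posCone (k : ℕ) : Submonoid (Multiplicative (Fin k → ℤ)) where
  carrier := {g | ∀ i, 0 ≤ Multiplicative.toAdd g i}
  mul_mem' := by
    intro a b ha hb i
    simpa using add_nonneg (ha i) (hb i)
  one_mem' := by
    intro i
    simp

/-- The `i`-th standard generator of `ℕ^k ⊆ ℤ^k`. -/
def egen (k : ℕ) (i : Fin k) : Multiplicative (Fin k → ℤ) :=
  Multiplicative.ofAdd (Pi.single i 1)

end PSG
namespace PSG

/-!
All range projections are diagonal in the basis `(e_c)` of `ℓ²(E¹)`: `S_a S_a*` projects onto the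
closed span of the `e_c` with `a` an initial segment of `c`. Hence

* range projections of distinct edges of the same degree are orthogonal, which gives (4);
* `S_μ S_μ* S_ν S_ν* = ∑_{γ ∈ MCE(μ,ν)} S_γ S_γ*`, because `c` extends both `μ` and `ν` exactly when
  it extends some (necessarily unique) `γ ∈ MCE(μ,ν)`; multiplying by `S_μ*` on the left and by
  `S_ν` on the right turns this into (5);
* `S_a S_a* e_v = 0` for a vertex `v` and `d(a) ≠ 1`, because a vertex has no initial segment of
  nontrivial degree.
-/

section ProductSystem

variable {G : Type*} [Group G] {Λ : Type*} {P : Submonoid G}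
  {d : Λ → G} {src rng : Λ → Λ} {mul : Λ → Λ → Λ} {a b b' c μ ν v : Λ}

theorem IsLUB2.unique (hQLO : QuasiLatticeOrdered P) {p q r r' : G}
    (hr : IsLUB2 P p q r) (hr' : IsLUB2 P p q r') : r = r' := by
  have hle : r⁻¹ * r' ∈ P := hr.2 _ hr'.1
  have hge : (r⁻¹ * r')⁻¹ ∈ P := by simpa [qle] using hr'.2 _ hr.1
  exact inv_mul_eq_one.mp (hQLO.1 _ hle hge)

theorem IsInit.rng_eq_src_tail (h : IsInit src rng mul a c) :
    rng a = src (tail src rng mul a c) := by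
  rw [tail, dif_pos h]
  exact h.choose_spec.1

theorem IsInit.mul_tail (h : IsInit src rng mul a c) : mul a (tail src rng mul a c) = c := by
  rw [tail, dif_pos h]
  exact h.choose_spec.2

namespace IsProductSystem

variable (h : IsProductSystem P d src rng mul)

include h

theorem eq_and_eq_of_mul_eq_mul {a' : Λ} (hab : rng a = src b) (hab' : rng a' = src b')
    (hd : d a = d a') (he : mul a b = mul a' b') : a = a' ∧ b = b' := by
  have hdb : d b = d b' := by
    have hdeg : d a * d b = d a' * d b' := by rw [← h.d_mul _ _ hab, he, h.d_mul _ _ hab']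
    rwa [hd, mul_left_cancel_iff] at hdeg
  exact Prod.mk.inj <| (h.factor _ _ (h.d_mem a) (h.d_mem b) _ (h.d_mul _ _ hab)).unique
    (y₁ := (a, b)) (y₂ := (a', b')) ⟨rfl, rfl, hab, rfl⟩ ⟨hd.symm, hdb.symm, hab', he.symm⟩

theorem mul_left_cancel (hab : rng a = src b) (hab' : rng a = src b')
    (he : mul a b = mul a b') : b = b' :=
  (h.eq_and_eq_of_mul_eq_mul hab hab' rfl he).2

theorem isInit_trans (hab : IsInit src rng mul a b) (hbc : IsInit src rng mul b c) :
    IsInit src rng mul a c := by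
  obtain ⟨x, hx, rfl⟩ := hab
  obtain ⟨y, hy, rfl⟩ := hbc
  rw [h.rng_mul _ _ hx] at hy
  exact ⟨mul x y, by rw [h.src_mul _ _ hy, hx], (h.mul_assoc' _ _ _ hx hy).symm⟩

theorem qle_of_isInit (hac : IsInit src rng mul a c) : qle P (d a) (d c) := by
  obtain ⟨x, hx, rfl⟩ := hac
  simpa [qle, h.d_mul _ _ hx] using h.d_mem x

theorem eq_of_isInit_of_d_eq (hac : IsInit src rng mul a c) (hbc : IsInit src rng mul b c)
    (hd : d a = d b) : a = b :=
  (h.eq_and_eq_of_mul_eq_mul hac.rng_eq_src_tail hbc.rng_eq_src_tail hd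
    (hac.mul_tail.trans hbc.mul_tail.symm)).1

theorem exists_isInit_of_qle {p : G} (hp : p ∈ P) (hpc : qle P p (d c)) :
    ∃ a, d a = p ∧ IsInit src rng mul a c := by
  obtain ⟨⟨a, b⟩, ⟨hda, -, hab, hmul⟩, -⟩ := h.factor p (p⁻¹ * d c) hp hpc c (by group)
  exact ⟨a, hda, b, hab, hmul⟩

theorem isInit_of_isInit_of_qle (hac : IsInit src rng mul a c) (hbc : IsInit src rng mul b c)
    (hd : qle P (d a) (d b)) : IsInit src rng mul a b := by
  obtain ⟨a', hda', ha'b⟩ := h.exists_isInit_of_qle (h.d_mem a) hd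
  rwa [h.eq_of_isInit_of_d_eq hac (h.isInit_trans ha'b hbc) hda'.symm]

theorem not_isInit_vertex (hQLO : QuasiLatticeOrdered P) (hv : d v = 1) (ha : d a ≠ 1) :
    ¬IsInit src rng mul a v := by
  intro hav
  have hinv : (d a)⁻¹ ∈ P := by simpa [qle, hv] using h.qle_of_isInit hav
  exact ha (hQLO.1 _ (h.d_mem a) hinv)

theorem exists_mem_MCE_isInit_iff (hQLO : QuasiLatticeOrdered P) :
    (∃ γ ∈ MCE P d src rng mul μ ν, IsInit src rng mul γ c) ↔
      IsInit src rng mul μ c ∧ IsInit src rng mul ν c := by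
  constructor
  · rintro ⟨γ, ⟨hμγ, hνγ, -⟩, hγc⟩
    exact ⟨h.isInit_trans hμγ hγc, h.isInit_trans hνγ hγc⟩
  · rintro ⟨hμc, hνc⟩
    have hub : IsUB P (d μ) (d ν) (d c) :=
      ⟨h.d_mem c, h.qle_of_isInit hμc, h.qle_of_isInit hνc⟩
    obtain ⟨r, hr⟩ := hQLO.2 _ (h.d_mem μ) _ (h.d_mem ν) ⟨_, hub⟩
    obtain ⟨γ, rfl, hγc⟩ := h.exists_isInit_of_qle hr.1.1 (hr.2 _ hub)
    exact ⟨γ, ⟨h.isInit_of_isInit_of_qle hμc hγc hr.1.2.1,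
      h.isInit_of_isInit_of_qle hνc hγc hr.1.2.2, hr⟩, hγc⟩

end IsProductSystem

namespace IsToeplitzFamily

variable {B : Type*} [CStarAlgebra B] [PartialOrder B] {t : Λ → B}

theorem mul_star_mul_self (h : IsProductSystem P d src rng mul)
    (ht : IsToeplitzFamily P d src rng mul t) (a : Λ) : t a * star (t a) * t a = t a := by
  rw [mul_assoc, ht.star_mul_self, ht.mul_eq _ _ (h.src_vertex _ (h.d_rng a)).symm,
    h.mul_rng_self]

theorem star_mul_of_isInit (h : IsProductSystem P d src rng mul)
    (ht : IsToeplitzFamily P d src rng mul t) (hac : IsInit src rng mul a c) :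
    star (t a) * t c = t (tail src rng mul a c) := by
  set b := tail src rng mul a c
  have hab : rng a = src b := hac.rng_eq_src_tail
  calc star (t a) * t c
      = star (t a) * t a * t b := by rw [mul_assoc, ht.mul_eq _ _ hab, hac.mul_tail]
    _ = t (src b) * t b := by rw [ht.star_mul_self, hab]
    _ = t b := by rw [ht.mul_eq _ _ (h.rng_vertex _ (h.d_src b)), h.src_mul_self]

theorem tckRel_of_mul_star_mul_mul_star (h : IsProductSystem P d src rng mul)
    (ht : IsToeplitzFamily P d src rng mul t)
    (hmul : ∀ μ ν, ∀ M : Finset Λ, ↑M = MCE P d src rng mul μ ν →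
      t μ * star (t μ) * (t ν * star (t ν)) = ∑ γ ∈ M, t γ * star (t γ)) :
    TCKrel P d src rng mul t := by
  intro μ ν M hM
  have hstar : star (t μ) * (t μ * star (t μ)) = star (t μ) := by
    simpa [mul_assoc] using congrArg star (ht.mul_star_mul_self h μ)
  calc star (t μ) * t ν
      = star (t μ) * (t μ * star (t μ)) * (t ν * star (t ν) * t ν) := by
        rw [hstar, ht.mul_star_mul_self h]
    _ = star (t μ) * (t μ * star (t μ) * (t ν * star (t ν))) * t ν := by
        simp only [mul_assoc]
    _ = ∑ γ ∈ M, (star (t μ) * t γ) * (star (t γ) * t ν) := by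
        simp only [hmul μ ν M hM, Finset.mul_sum, Finset.sum_mul, mul_assoc]
    _ = ∑ γ ∈ M, t (tail src rng mul μ γ) * star (t (tail src rng mul ν γ)) := by
        refine Finset.sum_congr rfl fun γ hγ => ?_
        obtain ⟨hμγ, hνγ, -⟩ := hM.subset (Finset.mem_coe.mpr hγ)
        have hγν : star (t γ) * t ν = star (t (tail src rng mul ν γ)) := by
          simpa using congrArg star (ht.star_mul_of_isInit h hνγ)
        rw [ht.star_mul_of_isInit h hμγ, hγν]

end IsToeplitzFamily

end ProductSystem

section HilbertBasis

variable {ι 𝕜 E : Type*} [RCLike 𝕜] [NormedAddCommGroup E] [InnerProductSpace 𝕜 E]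

theorem eq_of_forall_inner_hilbertBasis_eq (e : HilbertBasis ι 𝕜 E) {x y : E}
    (h : ∀ i, inner 𝕜 (e i) x = inner 𝕜 (e i) y) : x = y :=
  e.repr.injective <| lp.ext <| funext fun i => by
    simpa only [e.repr_apply_apply] using h i

theorem continuousLinearMap_ext_hilbertBasis (e : HilbertBasis ι 𝕜 E) {F : Type*}
    [NormedAddCommGroup F] [NormedSpace 𝕜 F] {A B : E →L[𝕜] F} (h : ∀ i, A (e i) = B (e i)) :
    A = B :=
  ContinuousLinearMap.ext_on (Submodule.dense_iff_topologicalClosure_eq_top.mpr e.dense_span)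
    (Set.forall_mem_range.mpr h)

end HilbertBasis

section Fock

variable {G : Type*} [Group G] {Λ : Type*} {P : Submonoid G}
  {d : Λ → G} {src rng : Λ → Λ} {mul : Λ → Λ → Λ} {a b c v w : Λ}

/-- `S` is the Fock family of the product system, acting on an orthonormal basis `e` indexed by
its edges. The model `ℓ²(E¹)` is replaced by any Hilbert space with such a basis. -/
def IsFockFamily {𝕜 E : Type*} [RCLike 𝕜] [NormedAddCommGroup E] [InnerProductSpace 𝕜 E]
    (src rng : Λ → Λ) (mul : Λ → Λ → Λ) (e : HilbertBasis Λ 𝕜 E) (S : Λ → E →L[𝕜] E) : Prop :=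
  ∀ a μ, S a (e μ) = if rng a = src μ then e (mul a μ) else 0

namespace IsFockFamily

section RCLike

variable {𝕜 E : Type*} [RCLike 𝕜] [NormedAddCommGroup E] [InnerProductSpace 𝕜 E]
  {e : HilbertBasis Λ 𝕜 E} {S : Λ → E →L[𝕜] E}

theorem mul_eq (h : IsProductSystem P d src rng mul) (hS : IsFockFamily src rng mul e S)
    (hab : rng a = src b) : S a * S b = S (mul a b) := by
  refine continuousLinearMap_ext_hilbertBasis e fun μ => ?_
  rw [mul_apply_eq_comp, hS, hS, h.rng_mul _ _ hab]
  split_ifs with hbμ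
  · rw [hS, if_pos (by rw [h.src_mul _ _ hbμ, hab]), h.mul_assoc' _ _ _ hab hbμ]
  · exact map_zero _

theorem src_mul (h : IsProductSystem P d src rng mul) (hS : IsFockFamily src rng mul e S)
    (a : Λ) : S (src a) * S a = S a := by
  rw [hS.mul_eq h (h.rng_vertex _ (h.d_src a)), h.src_mul_self]

theorem vertex_apply (h : IsProductSystem P d src rng mul) (hS : IsFockFamily src rng mul e S)
    (hv : d v = 1) (μ : Λ) : S v (e μ) = if v = src μ then e μ else 0 := by
  rw [hS, h.rng_vertex v hv]
  split_ifs with hvμ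
  · rw [hvμ, h.src_mul_self]
  · rfl

theorem vertex_mul_vertex_of_ne (h : IsProductSystem P d src rng mul)
    (hS : IsFockFamily src rng mul e S) (hv : d v = 1) (hw : d w = 1) (hvw : v ≠ w) :
    S v * S w = 0 := by
  refine continuousLinearMap_ext_hilbertBasis e fun μ => ?_
  rw [mul_apply_eq_comp, hS.vertex_apply h hw]
  split_ifs with hwμ
  · rw [hS.vertex_apply h hv, if_neg (hwμ ▸ hvw), zero_apply]
  · exact map_zero _

variable [CompleteSpace E]

theorem inner_star_apply (hS : IsFockFamily src rng mul e S) (a b c : Λ) :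
    inner 𝕜 (e b) (star (S a) (e c)) = if rng a = src b ∧ mul a b = c then 1 else 0 := by
  rw [ContinuousLinearMap.star_eq_adjoint, ContinuousLinearMap.adjoint_inner_right, hS, ite_and]
  split_ifs with hab hc
  · rw [orthonormal_iff_ite.mp e.orthonormal, if_pos hc]
  · rw [orthonormal_iff_ite.mp e.orthonormal, if_neg hc]
  · exact inner_zero_left _

theorem star_apply_mul (h : IsProductSystem P d src rng mul)
    (hS : IsFockFamily src rng mul e S) (hab : rng a = src b) :
    star (S a) (e (mul a b)) = e b := by
  refine eq_of_forall_inner_hilbertBasis_eq e fun i => ?_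
  have hiff : (rng a = src i ∧ mul a i = mul a b) ↔ i = b := by
    constructor
    · rintro ⟨hai, he⟩
      exact h.mul_left_cancel hai hab he
    · rintro rfl
      exact ⟨hab, rfl⟩
  rw [hS.inner_star_apply, orthonormal_iff_ite.mp e.orthonormal]
  exact if_congr hiff rfl rfl

theorem star_apply_of_not_isInit (hS : IsFockFamily src rng mul e S)
    (hac : ¬IsInit src rng mul a c) : star (S a) (e c) = 0 := by
  refine eq_of_forall_inner_hilbertBasis_eq e fun i => ?_
  rw [hS.inner_star_apply, if_neg fun hi => hac ⟨i, hi⟩, inner_zero_right]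

theorem star_mul_self (h : IsProductSystem P d src rng mul)
    (hS : IsFockFamily src rng mul e S) (a : Λ) : star (S a) * S a = S (rng a) := by
  refine continuousLinearMap_ext_hilbertBasis e fun μ => ?_
  rw [mul_apply_eq_comp, hS, hS.vertex_apply h (h.d_rng a)]
  split_ifs with haμ
  · exact hS.star_apply_mul h haμ
  · exact map_zero _

theorem mul_star_apply (h : IsProductSystem P d src rng mul)
    (hS : IsFockFamily src rng mul e S) (a c : Λ) :
    (S a * star (S a)) (e c) = if IsInit src rng mul a c then e c else 0 := by
  rw [mul_apply_eq_comp]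
  split_ifs with hac
  · obtain ⟨b, hab, rfl⟩ := hac
    rw [hS.star_apply_mul h hab, hS, if_pos hab]
  · rw [hS.star_apply_of_not_isInit hac, map_zero]

theorem sum_mul_star_apply (h : IsProductSystem P d src rng mul)
    (hS : IsFockFamily src rng mul e S) {M : Finset Λ}
    (hM : ∀ a ∈ M, ∀ b ∈ M, d a = d b) (c : Λ) :
    (∑ a ∈ M, S a * star (S a)) (e c) =
      if ∃ a ∈ M, IsInit src rng mul a c then e c else 0 := by
  simp only [sum_apply, hS.mul_star_apply h]
  split_ifs with hc
  · obtain ⟨a, ha, hac⟩ := hc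
    rw [Finset.sum_eq_single_of_mem a ha, if_pos hac]
    exact fun b hb hba => if_neg fun hbc => hba (h.eq_of_isInit_of_d_eq hbc hac (hM b hb a ha))
  · exact Finset.sum_eq_zero fun a ha => if_neg fun hac => hc ⟨a, ha, hac⟩

theorem isStarProjection_sum_mul_star (h : IsProductSystem P d src rng mul)
    (hS : IsFockFamily src rng mul e S) {M : Finset Λ} (hM : ∀ a ∈ M, ∀ b ∈ M, d a = d b) :
    IsStarProjection (∑ a ∈ M, S a * star (S a)) where
  isIdempotentElem := by
    refine continuousLinearMap_ext_hilbertBasis e fun c => ?_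
    rw [mul_apply_eq_comp, hS.sum_mul_star_apply h hM]
    split_ifs with hc
    · rw [hS.sum_mul_star_apply h hM, if_pos hc]
    · exact map_zero _
  isSelfAdjoint := isSelfAdjoint_sum _ fun a _ => .mul_star_self (S a)

theorem isStarProjection_vertex (h : IsProductSystem P d src rng mul)
    (hS : IsFockFamily src rng mul e S) (hv : d v = 1) : IsStarProjection (S v) where
  isIdempotentElem := by
    simpa only [h.src_vertex v hv, IsIdempotentElem] using hS.src_mul h v
  isSelfAdjoint := by
    simpa only [hS.star_mul_self h, h.rng_vertex v hv] using IsSelfAdjoint.star_mul_self (S v)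

theorem mul_star_mul_mul_star (hQLO : QuasiLatticeOrdered P)
    (h : IsProductSystem P d src rng mul) (hS : IsFockFamily src rng mul e S) {μ ν : Λ}
    {M : Finset Λ} (hM : ↑M = MCE P d src rng mul μ ν) :
    S μ * star (S μ) * (S ν * star (S ν)) = ∑ γ ∈ M, S γ * star (S γ) := by
  have hmem (γ : Λ) : γ ∈ M ↔ γ ∈ MCE P d src rng mul μ ν := by rw [← hM, Finset.mem_coe]
  have hdeg : ∀ γ ∈ M, ∀ γ' ∈ M, d γ = d γ' := fun γ hγ γ' hγ' =>
    ((hmem γ).mp hγ).2.2.unique hQLO ((hmem γ').mp hγ').2.2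
  refine continuousLinearMap_ext_hilbertBasis e fun c => ?_
  rw [hS.sum_mul_star_apply h hdeg, mul_apply_eq_comp, hS.mul_star_apply h]
  simp only [hmem, h.exists_mem_MCE_isInit_iff hQLO]
  by_cases hν : IsInit src rng mul ν c
  · simp only [hν, if_true, and_true, hS.mul_star_apply h]
  · simp only [hν, if_false, and_false, map_zero]

theorem sum_mul_star_apply_vertex (hQLO : QuasiLatticeOrdered P)
    (h : IsProductSystem P d src rng mul) (hS : IsFockFamily src rng mul e S) (hv : d v = 1)
    {M : Finset Λ} (hM : ∀ a ∈ M, d a ≠ 1) : (∑ a ∈ M, S a * star (S a)) (e v) = 0 := by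
  rw [sum_apply]
  refine Finset.sum_eq_zero fun a ha => ?_
  rw [hS.mul_star_apply h, if_neg (h.not_isInit_vertex hQLO hv (hM a ha))]

end RCLike

section Complex

variable {H : Type*} [NormedAddCommGroup H] [InnerProductSpace ℂ H] [CompleteSpace H]
  {e : HilbertBasis Λ ℂ H} {S : Λ → H →L[ℂ] H}

theorem sum_mul_star_le (h : IsProductSystem P d src rng mul)
    (hS : IsFockFamily src rng mul e S) (hv : d v = 1) {M : Finset Λ}
    (hdeg : ∀ a ∈ M, ∀ b ∈ M, d a = d b) (hsrc : ∀ a ∈ M, src a = v) :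
    ∑ a ∈ M, S a * star (S a) ≤ S v := by
  refine (hS.isStarProjection_sum_mul_star h hdeg).le_of_mul_eq_right
    (hS.isStarProjection_vertex h hv) ?_
  rw [Finset.mul_sum]
  refine Finset.sum_congr rfl fun a ha => ?_
  rw [← mul_assoc, ← hsrc a ha, hS.src_mul h]

theorem isToeplitzFamily (h : IsProductSystem P d src rng mul)
    (hS : IsFockFamily src rng mul e S) : IsToeplitzFamily P d src rng mul S where
  vertex_sa _ hv := (hS.isStarProjection_vertex h hv).isSelfAdjoint
  vertex_idem _ hv := (hS.isStarProjection_vertex h hv).isIdempotentElem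
  vertex_orth _ _ := hS.vertex_mul_vertex_of_ne h
  mul_eq _ _ := hS.mul_eq h
  star_mul_self := hS.star_mul_self h
  dom _ _ _ _ hv _ hF := hS.sum_mul_star_le h hv
    (fun a ha b hb => (hF a ha).1.trans (hF b hb).1.symm) fun a ha => (hF a ha).2

theorem isTCKFamily (hQLO : QuasiLatticeOrdered P) (h : IsProductSystem P d src rng mul)
    (hS : IsFockFamily src rng mul e S) : IsTCKFamily P d src rng mul S :=
  ⟨hS.isToeplitzFamily h, (hS.isToeplitzFamily h).tckRel_of_mul_star_mul_mul_star h
    fun _ _ _ => hS.mul_star_mul_mul_star hQLO h⟩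

end Complex

end IsFockFamily

end Fock

theorem stmt9_general {G : Type*} [Group G] {Λ : Type*} (P : Submonoid G)
    (hQLO : QuasiLatticeOrdered P)
    (d : Λ → G) (src rng : Λ → Λ) (mul : Λ → Λ → Λ)
    (hPS : IsProductSystem P d src rng mul)
    {H : Type*} [NormedAddCommGroup H] [InnerProductSpace ℂ H] [CompleteSpace H]
    (e : HilbertBasis Λ ℂ H) (S : Λ → H →L[ℂ] H) (hS : IsFockFamily src rng mul e S) :
    IsTCKFamily P d src rng mul S ∧
    (∀ v, d v = 1 → ∀ p, p ∈ P → p ≠ 1 →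
      ∀ M : Finset Λ, (↑M = {a : Λ | d a = p ∧ src a = v}) →
        ((S v - ∑ a ∈ M, S a * star (S a)) (e v) = e v ∧
          S v ≠ ∑ a ∈ M, S a * star (S a))) := by
  refine ⟨hS.isTCKFamily hQLO hPS, fun v hv p _ hp M hM => ?_⟩
  have hdeg : ∀ a ∈ M, d a ≠ 1 := fun a ha => (hM.subset (Finset.mem_coe.mpr ha)).1 ▸ hp
  have hsum := hS.sum_mul_star_apply_vertex hQLO hPS hv hdeg
  have hSv : S v (e v) = e v := by
    rw [hS.vertex_apply hPS hv, if_pos (hPS.src_vertex v hv).symm]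
  refine ⟨by rw [sub_apply, hSv, hsum, sub_zero], fun heq => e.orthonormal.ne_zero v ?_⟩
  rw [← hSv, heq, hsum]

/-- Example 6.3 (the Fock representation): the Fock family `{S_λ}` on `ℓ²(E¹)` is a
Toeplitz–Cuntz–Krieger `E`-family, and `(S_v − ∑_{λ∈s_p⁻¹(v)} S_λ S_λ*) e_v = e_v` whenever
`s_p⁻¹(v)` is finite; in particular the Cuntz–Pimsner relation fails at such `v`, `p`. -/
theorem stmt9 {G : Type*} [Group G] {Λ : Type*} (P : Submonoid G)
    (hQLO : QuasiLatticeOrdered P)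
    (d : Λ → G) (src rng : Λ → Λ) (mul : Λ → Λ → Λ)
    (hPS : IsProductSystem P d src rng mul)
    (hFA : FinitelyAligned P d src rng mul)
    {H : Type*} [NormedAddCommGroup H] [InnerProductSpace ℂ H] [CompleteSpace H]
    (hb : HilbertBasis Λ ℂ H)
    (S : Λ → H →L[ℂ] H)
    (hS : ∀ a μ : Λ, S a (hb μ) = if rng a = src μ then hb (mul a μ) else 0) :
    IsTCKFamily P d src rng mul S ∧
    (∀ v, d v = 1 → ∀ p, p ∈ P → p ≠ 1 →
      ∀ M : Finset Λ, (↑M = {a : Λ | d a = p ∧ src a = v}) →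
        ((S v - ∑ a ∈ M, S a * star (S a)) (hb v) = hb v ∧
          S v ≠ ∑ a ∈ M, S a * star (S a))) :=
  stmt9_general P hQLO d src rng mul hPS hb S hS

end PSG
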